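/- For lattice polytopes P_1, ..., P_n in R^n, MV(P_1,...,P_n) = 1 + sum over nonempty subsets I of [n] of (-1)^(dim(P_I) - |I|) times the number of lattice points in the relative interior of P_I. -/

import Mathlib

open scoped Pointwise
open MeasureTheory Finset

def IsLatticePt {n : ℕ} (x : Fin n → ℝ) : Prop := ∀ i, ∃ z : ℤ, x i = (z : ℝ)

def IsLatticePolytope {n : ℕ} (P : Set (Fin n → ℝ)) : Prop :=
  ∃ V : Finset (Fin n → ℝ), V.Nonempty ∧ (∀ v ∈ V, IsLatticePt v) ∧
    P = convexHull ℝ (V : Set (Fin n → ℝ))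

noncomputable def adim {n : ℕ} (A : Set (Fin n → ℝ)) : ℕ :=
  Module.finrank ℝ (affineSpan ℝ A).direction

def relintLat {n : ℕ} (A : Set (Fin n → ℝ)) : Set (Fin n → ℝ) :=
  {x ∈ intrinsicInterior ℝ A | IsLatticePt x}

def intLat {n : ℕ} (A : Set (Fin n → ℝ)) : Set (Fin n → ℝ) :=
  {x ∈ interior A | IsLatticePt x}

noncomputable def mixedVol {n m : ℕ} (P : Fin m → Set (Fin n → ℝ)) : ℝ :=
  ∑ I : Finset (Fin m), (-1 : ℝ) ^ (m - I.card) * (volume (∑ i ∈ I, P i)).toReal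


section Euler

variable {E : Type*} [AddCommGroup E] [Module ℝ E]

/-- Convex and relatively open, in an algebraic sense. -/
def AlgOpen (C : Set E) : Prop :=
  Convex ℝ C ∧ ∀ x ∈ C, ∀ y ∈ C, ∃ ε : ℝ, 0 < ε ∧ x + ε • (x - y) ∈ C

/-- Bounded in every direction. -/
def AlgBdd (C : Set E) : Prop :=
  ∀ l : E →ₗ[ℝ] ℝ, BddBelow (l '' C) ∧ BddAbove (l '' C)

lemma AlgOpen.dir {C : Set E} (h : AlgOpen C) {x d : E} (hx : x ∈ C)
    (hd : d ∈ vectorSpan ℝ C) : ∃ ε : ℝ, 0 < ε ∧ ∀ δ : ℝ, |δ| ≤ ε → x + δ • d ∈ C := by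
  rw [vectorSpan_eq_span_vsub_set_right ℝ hx] at hd
  induction hd using Submodule.span_induction with
  | mem d hd =>
    obtain ⟨y, hy, rfl⟩ := hd
    obtain ⟨ε, hε, h1⟩ := h.2 x hx y hy
    refine ⟨min 1 ε, by positivity, fun δ hδ => ?_⟩
    have h2 := (le_min_iff.1 hδ).1
    have h3 := (le_min_iff.1 hδ).2
    simp only [vsub_eq_sub]
    rcases le_or_gt 0 δ with h0 | h0
    · rw [abs_of_nonneg h0] at h2 h3
      have := h.1 hx hy (sub_nonneg.2 h2) h0 (by ring)
      convert this using 1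
      module
    · rw [abs_of_neg h0] at h2 h3
      have h4 : -δ / ε ≤ 1 := by rw [div_le_one hε]; exact h3
      have h5 : 0 ≤ -δ / ε := by apply div_nonneg <;> linarith
      have := h.1 hx h1 (sub_nonneg.2 h4) h5 (by ring)
      convert this using 1
      rw [smul_add, smul_smul, div_mul_cancel₀ _ hε.ne']
      module
  | zero => exact ⟨1, one_pos, fun δ _ => by simpa using hx⟩
  | add d e _ _ hd he =>
    obtain ⟨ε, hε, h1⟩ := hd
    obtain ⟨ε', hε', h2⟩ := he
    refine ⟨min ε ε' / 2, by positivity, fun δ hδ => ?_⟩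
    have h3 : |2 * δ| ≤ min ε ε' := by rw [abs_mul, abs_two]; linarith
    have := h.1 (h1 (2 * δ) (le_min_iff.1 h3).1) (h2 (2 * δ) (le_min_iff.1 h3).2)
      (by norm_num : (0:ℝ) ≤ 1/2) (by norm_num : (0:ℝ) ≤ 1/2) (by norm_num)
    convert this using 1
    module
  | smul c d _ hd =>
    obtain ⟨ε, hε, h1⟩ := hd
    refine ⟨ε / (|c| + 1), by positivity, fun δ hδ => ?_⟩
    rw [smul_smul]
    apply h1
    rw [abs_mul]
    rw [le_div_iff₀ (by positivity)] at hδ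
    nlinarith [abs_nonneg δ, abs_nonneg c]

lemma AlgOpen.image {F : Type*} [AddCommGroup F] [Module ℝ F] {C : Set E} (h : AlgOpen C)
    (f : E →ₗ[ℝ] F) : AlgOpen (f '' C) := by
  refine ⟨h.1.linear_image f, ?_⟩
  rintro _ ⟨x, hx, rfl⟩ _ ⟨y, hy, rfl⟩
  obtain ⟨ε, hε, h1⟩ := h.2 x hx y hy
  exact ⟨ε, hε, _, h1, by simp⟩

lemma AlgBdd.image {F : Type*} [AddCommGroup F] [Module ℝ F] {C : Set E} (h : AlgBdd C)
    (f : E →ₗ[ℝ] F) : AlgBdd (f '' C) := by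
  intro l
  have := h (l ∘ₗ f)
  simpa [Set.image_image] using this

lemma euler_one {ι : Type*} [Fintype ι] (a χ : ι → ℝ) (I : ι → Set ℝ)
    (h : ∀ k, (∃ p, I k = {p} ∧ χ k = 1) ∨ (∃ u v, u < v ∧ I k = Set.Ioo u v ∧ χ k = -1) ∨
      (I k = ∅ ∧ χ k = 0))
    (h0 : ∀ x, ∑ k, a k * (I k).indicator 1 x = 0) : ∑ k, a k * χ k = 0 := by
  classical
  -- right limits
  let J : ι → Set ℝ := fun k => {x | ∀ᶠ y in nhdsWithin x (Set.Ioi x), y ∈ I k}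
  have hJ : ∀ k, ∀ x, ∀ᶠ y in nhdsWithin x (Set.Ioi x), (y ∈ I k ↔ x ∈ J k) := by
    intro k x
    by_cases hx : x ∈ J k
    · filter_upwards [hx] with y hy
      simp [hx, hy]
    · have key : ∀ᶠ y in nhdsWithin x (Set.Ioi x), y ∉ I k := by
        rcases h k with ⟨p, hp, -⟩ | ⟨u, v, huv, hp, -⟩ | ⟨hp, -⟩
        · rw [hp]
          rcases lt_or_ge x p with hxp | hxp
          · filter_upwards [Ioo_mem_nhdsGT hxp] with y hy
            simpa using hy.2.ne
          · filter_upwards [self_mem_nhdsWithin] with y hy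
            simpa using (lt_of_le_of_lt hxp hy).ne'
        · rw [hp]
          rcases lt_or_ge x u with hxu | hxu
          · filter_upwards [Ioo_mem_nhdsGT hxu] with y hy
            simp [hy.2.le]
          · rcases lt_or_ge x v with hxv | hxv
            · exfalso
              apply hx
              show ∀ᶠ y in nhdsWithin x (Set.Ioi x), y ∈ I k
              rw [hp]
              filter_upwards [Ioo_mem_nhdsGT hxv] with y hy
              exact ⟨lt_of_le_of_lt hxu hy.1, hy.2⟩
            · filter_upwards [self_mem_nhdsWithin] with y hy
              simp only [Set.mem_Ioo, not_and, not_lt]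
              intro _
              exact (lt_of_le_of_lt hxv hy).le
        · simp [hp]
      filter_upwards [key] with y hy
      simp [hx, hy]
  have h1 : ∀ x, ∑ k, a k * (J k).indicator 1 x = 0 := by
    intro x
    have : ∀ᶠ y in nhdsWithin x (Set.Ioi x), ∀ k, (y ∈ I k ↔ x ∈ J k) :=
      Filter.eventually_all.2 fun k => hJ k x
    obtain ⟨y, hy⟩ := this.exists
    rw [← h0 y]
    refine Finset.sum_congr rfl fun k _ => ?_
    simp only [Set.indicator_apply, hy k, Pi.one_apply]
  -- finite set of endpoints
  have h2 : ∀ k, ∃ F : Finset ℝ, ∀ F' : Finset ℝ, F ⊆ F' →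
      ∑ x ∈ F', ((I k).indicator (1 : ℝ → ℝ) x - (J k).indicator 1 x) = χ k := by
    intro k
    rcases h k with ⟨p, hp, hχ⟩ | ⟨u, v, huv, hp, hχ⟩ | ⟨hp, hχ⟩
    · refine ⟨{p}, fun F' hF => ?_⟩
      have hJk : J k = ∅ := by
        ext x
        simp only [Set.mem_empty_iff_false, iff_false]
        intro hx
        have hx' : ∀ᶠ y in nhdsWithin x (Set.Ioi x), y ∈ I k := hx
        rw [hp] at hx'
        rcases lt_or_ge x p with hxp | hxp
        · obtain ⟨y, hy, hy'⟩ := (hx'.and (Ioo_mem_nhdsGT hxp)).exists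
          exact hy'.2.ne hy
        · obtain ⟨y, hy, hy'⟩ := (hx'.and self_mem_nhdsWithin).exists
          have : x < y := hy'
          have h3 : y = p := hy
          linarith
      rw [hJk, hp, hχ, Finset.sum_eq_single_of_mem p (hF (by simp))]
      · simp
      · intro b _ hb
        simp [hb]
    · refine ⟨{u}, fun F' hF => ?_⟩
      have hJk : J k = Set.Ico u v := by
        ext x
        constructor
        · intro hx
          have hx' : ∀ᶠ y in nhdsWithin x (Set.Ioi x), y ∈ I k := hx
          rw [hp] at hx'
          constructor
          · by_contra! hxu
            obtain ⟨y, hy, hy'⟩ := (hx'.and (Ioo_mem_nhdsGT hxu)).exists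
            exact absurd hy.1 (not_lt.2 hy'.2.le)
          · obtain ⟨y, hy, hy'⟩ := (hx'.and self_mem_nhdsWithin).exists
            exact lt_trans hy' hy.2
        · intro hx
          show ∀ᶠ y in nhdsWithin x (Set.Ioi x), y ∈ I k
          rw [hp]
          filter_upwards [Ioo_mem_nhdsGT hx.2] with y hy
          exact ⟨lt_of_le_of_lt hx.1 hy.1, hy.2⟩
      rw [hJk, hp, hχ, Finset.sum_eq_single_of_mem u (hF (by simp))]
      · simp [huv]
      · intro b _ hb
        have : b ∈ Set.Ioo u v ↔ b ∈ Set.Ico u v := by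
          constructor
          · exact fun h => ⟨h.1.le, h.2⟩
          · exact fun h => ⟨lt_of_le_of_ne h.1 (Ne.symm hb), h.2⟩
        simp only [Set.indicator_apply, this, sub_self]
    · refine ⟨∅, fun F' hF => ?_⟩
      have hJk : J k = ∅ := by
        ext x
        simp only [Set.mem_empty_iff_false, iff_false]
        intro hx
        have hx' : ∀ᶠ y in nhdsWithin x (Set.Ioi x), y ∈ I k := hx
        rw [hp] at hx'
        obtain ⟨y, hy⟩ := hx'.exists
        exact hy
      simp [hJk, hp, hχ]
  choose F hF using h2
  have h3 : ∀ k, χ k = ∑ x ∈ Finset.univ.biUnion F,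
      ((I k).indicator (1 : ℝ → ℝ) x - (J k).indicator 1 x) := fun k =>
    (hF k _ (Finset.subset_biUnion_of_mem F (Finset.mem_univ k))).symm
  simp_rw [h3, Finset.mul_sum]
  rw [Finset.sum_comm]
  refine Finset.sum_eq_zero fun x _ => ?_
  simp_rw [mul_sub]
  rw [Finset.sum_sub_distrib, h0, h1, sub_zero]

lemma finrank_map_span_singleton [FiniteDimensional ℝ E] (S : Submodule ℝ E) (d : E) (hd0 : d ≠ 0) :
    (d ∈ S → Module.finrank ℝ S = Module.finrank ℝ (S.map (Submodule.span ℝ {d}).mkQ) + 1) ∧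
    (d ∉ S → Module.finrank ℝ S = Module.finrank ℝ (S.map (Submodule.span ℝ {d}).mkQ)) := by
  set q := (Submodule.span ℝ {d}).mkQ
  have h := LinearMap.finrank_range_add_finrank_ker (q.domRestrict S)
  rw [LinearMap.range_domRestrict] at h
  constructor
  · intro hd
    rw [← h]
    congr 1
    have : LinearMap.ker (q.domRestrict S) = Submodule.span ℝ {(⟨d, hd⟩ : S)} := by
      ext ⟨x, hx⟩
      simp [q, Submodule.mem_span_singleton, LinearMap.domRestrict_apply]
    rw [this]
    exact finrank_span_singleton (by simpa using hd0)
  · intro hd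
    rw [← h]
    have : LinearMap.ker (q.domRestrict S) = ⊥ := by
      rw [eq_bot_iff]
      rintro ⟨x, hx⟩ hx'
      simp only [LinearMap.mem_ker, LinearMap.domRestrict_apply, q, Submodule.mkQ_apply,
        Submodule.Quotient.mk_eq_zero, Submodule.mem_span_singleton] at hx'
      obtain ⟨c, hc⟩ := hx'
      by_cases hc0 : c = 0
      · simp only [Submodule.mem_bot]; ext; simp [← hc, hc0]
      · exfalso
        apply hd
        have : d = c⁻¹ • x := by rw [← hc, smul_smul, inv_mul_cancel₀ hc0, one_smul]
        rw [this]
        exact S.smul_mem _ hx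
    rw [this, finrank_bot, add_zero]

lemma vectorSpan_linear_image {F : Type*} [AddCommGroup F] [Module ℝ F] (f : E →ₗ[ℝ] F) (C : Set E) :
    vectorSpan ℝ (f '' C) = (vectorSpan ℝ C).map f := by
  simpa using (AffineMap.map_vectorSpan f.toAffineMap (s := C)).symm

lemma euler_step [FiniteDimensional ℝ E] {ι : Type*} [Fintype ι] (a : ι → ℝ) (C : ι → Set E)
    (ho : ∀ k, AlgOpen (C k)) (hb : ∀ k, AlgBdd (C k))
    (h0 : ∀ x, ∑ k, a k * (C k).indicator 1 x = 0) (d : E) (hd : d ≠ 0) :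
    let q := (Submodule.span ℝ {d}).mkQ
    ∀ y, ∑ k, (a k * ((-1) ^ Module.finrank ℝ (vectorSpan ℝ (C k)) *
      (-1) ^ Module.finrank ℝ (vectorSpan ℝ (q '' C k)))) * (q '' C k).indicator 1 y = 0 := by
  classical
  intro q y
  obtain ⟨x, rfl⟩ := Submodule.mkQ_surjective _ y
  simp_rw [mul_assoc (a _)]
  apply euler_one a _ (fun k => {t : ℝ | x + t • d ∈ C k})
  · intro k
    have hI : (q x ∈ q '' C k) ↔ {t : ℝ | x + t • d ∈ C k}.Nonempty := by
      constructor
      · rintro ⟨z, hz, hzx⟩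
        have : z - x ∈ Submodule.span ℝ {d} := by
          rw [← Submodule.Quotient.eq]; exact hzx
        obtain ⟨c, hc⟩ := Submodule.mem_span_singleton.1 this
        exact ⟨c, by simpa [hc] using hz⟩
      · rintro ⟨t, ht⟩
        refine ⟨_, ht, ?_⟩
        have : q d = 0 := by simp [q, Submodule.mem_span_singleton_self]
        simp [this]
    obtain ⟨h1, h2⟩ := finrank_map_span_singleton (vectorSpan ℝ (C k)) d hd
    rw [← vectorSpan_linear_image] at h1 h2
    by_cases hne : {t : ℝ | x + t • d ∈ C k}.Nonempty
    swap
    · right; right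
      refine ⟨Set.not_nonempty_iff_eq_empty.1 hne, ?_⟩
      have : q x ∉ q '' C k := by rwa [hI]
      simp only [q] at this ⊢
      rw [Set.indicator_of_notMem this, mul_zero]
    have hmem := hI.2 hne
    have hind : (q '' C k).indicator (1 : (E ⧸ Submodule.span ℝ {d}) → ℝ) (q x) = 1 := by
      rw [Set.indicator_of_mem hmem]; rfl
    by_cases hdS : d ∈ vectorSpan ℝ (C k)
    · right; left
      obtain ⟨l, hl⟩ : ∃ l : E →ₗ[ℝ] ℝ, l d = 1 := Module.Projective.exists_dual_eq_one ℝ hd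
      have hbb : BddBelow {t : ℝ | x + t • d ∈ C k} := by
        obtain ⟨m, hm⟩ := (hb k l).1
        refine ⟨m - l x, fun t ht => ?_⟩
        have := hm ⟨_, ht, rfl⟩
        simp [hl] at this
        linarith
      have hba : BddAbove {t : ℝ | x + t • d ∈ C k} := by
        obtain ⟨m, hm⟩ := (hb k l).2
        refine ⟨m - l x, fun t ht => ?_⟩
        have := hm ⟨_, ht, rfl⟩
        simp [hl] at this
        linarith
      have hop : ∀ t ∈ {t : ℝ | x + t • d ∈ C k}, sInf {t : ℝ | x + t • d ∈ C k} < t ∧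
          t < sSup {t : ℝ | x + t • d ∈ C k} := by
        intro t ht
        obtain ⟨ε, hε, h3⟩ := (ho k).dir ht hdS
        have h4 : t - ε ∈ {t : ℝ | x + t • d ∈ C k} := by
          have := h3 (-ε) (by rw [abs_neg, abs_of_pos hε])
          show x + (t - ε) • d ∈ C k
          convert this using 1
          module
        have h5 : t + ε ∈ {t : ℝ | x + t • d ∈ C k} := by
          have := h3 ε (by rw [abs_of_pos hε])
          show x + (t + ε) • d ∈ C k
          convert this using 1
          module
        have := csInf_le hbb h4
        have := le_csSup hba h5
        constructor <;> linarith
      refine ⟨sInf {t : ℝ | x + t • d ∈ C k}, sSup {t : ℝ | x + t • d ∈ C k}, ?_, ?_, ?_⟩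
      · obtain ⟨t, ht⟩ := hne
        exact (hop t ht).1.trans (hop t ht).2
      · ext t
        refine ⟨hop t, fun ht => ?_⟩
        obtain ⟨u, hu, hut⟩ := exists_lt_of_csInf_lt hne ht.1
        obtain ⟨v, hv, htv⟩ := exists_lt_of_lt_csSup hne ht.2
        have huv : 0 < v - u := by linarith
        have g1 : 0 ≤ (v - t) / (v - u) := by apply div_nonneg <;> linarith
        have g2 : 0 ≤ (t - u) / (v - u) := by apply div_nonneg <;> linarith
        have := (ho k).1 hu hv g1 g2 (by field_simp; ring)
        show x + t • d ∈ C k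
        convert this using 1
        have e1 : (v - t) / (v - u) + (t - u) / (v - u) = 1 := by field_simp; ring
        have e2 : (v - t) / (v - u) * u + (t - u) / (v - u) * v = t := by field_simp; ring
        calc x + t • d = ((v - t) / (v - u) + (t - u) / (v - u)) • x +
            ((v - t) / (v - u) * u + (t - u) / (v - u) * v) • d := by rw [e1, e2, one_smul]
          _ = _ := by module
      · simp only [q] at hind ⊢
        rw [hind, h1 hdS, pow_succ, mul_one, mul_right_comm, ← mul_pow]
        simp
    · left
      obtain ⟨t, ht⟩ := hne
      refine ⟨t, ?_, ?_⟩
      · ext s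
        simp only [Set.mem_ofPred_eq, Set.mem_singleton_iff]
        refine ⟨fun hs => ?_, fun hs => hs ▸ ht⟩
        by_contra hst
        apply hdS
        have := vsub_mem_vectorSpan ℝ hs ht
        have h3 : (x + s • d) -ᵥ (x + t • d) = (s - t) • d := by rw [vsub_eq_sub]; module
        rw [h3] at this
        have h4 := (vectorSpan ℝ (C k)).smul_mem (s - t)⁻¹ this
        rwa [smul_smul, inv_mul_cancel₀ (sub_ne_zero.2 hst), one_smul] at h4
      · simp only [q] at hind ⊢
        rw [hind, h2 hdS, mul_one, ← mul_pow]
        simp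
  · intro t
    exact h0 (x + t • d)

end Euler

universe u v w

lemma euler_main (m : ℕ) : ∀ {E : Type u} {F : Type v} [AddCommGroup E] [Module ℝ E]
    [AddCommGroup F] [Module ℝ F] [FiniteDimensional ℝ E] {ι : Type w} [Fintype ι]
    (f : E →ₗ[ℝ] F) (a : ι → ℝ) (C : ι → Set E)
    (_ : ∀ k, AlgOpen (C k)) (_ : ∀ k, AlgBdd (C k))
    (_ : ∀ x, ∑ k, a k * (C k).indicator 1 x = 0) (_ : Module.finrank ℝ (LinearMap.ker f) = m) (y : F),
    ∑ k, (a k * ((-1) ^ Module.finrank ℝ (vectorSpan ℝ (C k)) *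
      (-1) ^ Module.finrank ℝ (vectorSpan ℝ (f '' C k)))) * (f '' C k).indicator 1 y = 0 := by
  induction m with
  | zero =>
    intro E F _ _ _ _ _ ι _ f a C ho hb h0 hf y
    have hinj : Function.Injective f := by
      rw [← LinearMap.ker_eq_bot]
      exact Submodule.finrank_eq_zero.1 hf
    by_cases hy : ∃ x, f x = y
    · obtain ⟨x, rfl⟩ := hy
      rw [← h0 x]
      refine Finset.sum_congr rfl fun k _ => ?_
      have h1 : Module.finrank ℝ (vectorSpan ℝ (f '' C k)) = Module.finrank ℝ (vectorSpan ℝ (C k)) := by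
        rw [vectorSpan_linear_image]
        exact (Submodule.equivMapOfInjective f hinj _).finrank_eq.symm
      rw [h1, ← mul_pow]
      have h2 : f x ∈ f '' C k ↔ x ∈ C k := hinj.mem_set_image
      classical
      simp only [Set.indicator_apply, h2]
      simp
    · refine Finset.sum_eq_zero fun k _ => ?_
      rw [Set.indicator_of_notMem, mul_zero]
      rintro ⟨x, -, hx⟩
      exact hy ⟨x, hx⟩
  | succ m ih =>
    intro E F _ _ _ _ _ ι _ f a C ho hb h0 hf y
    obtain ⟨⟨d, hdk⟩, hd⟩ : ∃ d : LinearMap.ker f, d ≠ 0 := by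
      have : Nontrivial (LinearMap.ker f) := by
        apply Module.nontrivial_of_finrank_pos (R := ℝ); omega
      exact exists_ne 0
    have hd0 : d ≠ 0 := by simpa using hd
    have h1 := euler_step a C ho hb h0 d hd0
    simp only at h1
    set q := (Submodule.span ℝ {d}).mkQ with hq
    have hle : Submodule.span ℝ {d} ≤ LinearMap.ker f := by
      rw [Submodule.span_le]; simpa using hdk
    have h2 := ih ((Submodule.span ℝ {d}).liftQ f hle) _ (fun k => q '' C k)
      (fun k => (ho k).image q) (fun k => (hb k).image q) h1 ?_ y
    · have h3 : ∀ k, (Submodule.span ℝ {d}).liftQ f hle '' (q '' C k) = f '' C k := by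
        intro k
        rw [Set.image_image]
        rfl
      simp_rw [h3] at h2
      rw [← h2]
      refine Finset.sum_congr rfl fun k _ => ?_
      congr 1
      rw [h3 k]
      have : ((-1 : ℝ) ^ Module.finrank ℝ (vectorSpan ℝ (q '' C k))) *
        ((-1 : ℝ) ^ Module.finrank ℝ (vectorSpan ℝ (q '' C k))) = 1 := by
        rw [← mul_pow]; simp
      linear_combination (-(a k * (-1) ^ Module.finrank ℝ (vectorSpan ℝ (C k)) *
      (-1) ^ Module.finrank ℝ (vectorSpan ℝ (f '' C k)))) * this
    · rw [Submodule.ker_liftQ]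
      have := (finrank_map_span_singleton (LinearMap.ker f) d hd0).1 hdk
      omega

section RelIntSec

variable {E : Type*} [AddCommGroup E] [Module ℝ E]

/-- `C` behaves as the relative interior of the convex set `P`. -/
def RelInt (P C : Set E) : Prop :=
  C.Nonempty ∧ C ⊆ P ∧ (∀ x ∈ C, ∀ y ∈ C, ∃ ε : ℝ, 0 < ε ∧ x + ε • (x - y) ∈ C) ∧
    ∀ p ∈ P, ∀ c ∈ C, ∀ t : ℝ, 0 < t → t ≤ 1 → (1 - t) • p + t • c ∈ C

lemma RelInt.algOpen {P C : Set E} (h : RelInt P C) : AlgOpen C := by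
  refine ⟨?_, h.2.2.1⟩
  intro x hx y hy a b ha hb hab
  rcases hb.eq_or_lt with rfl | hb
  · have : a = 1 := by linarith
    simpa [this] using hx
  · have := h.2.2.2 x (h.2.1 hx) y hy b hb (by linarith)
    rwa [← hab, add_sub_cancel_right] at this

lemma RelInt.extend {P C : Set E} (h : RelInt P C) {x y : E} (hx : x ∈ C) (hy : y ∈ P) :
    ∃ ε : ℝ, 0 < ε ∧ x + ε • (x - y) ∈ C := by
  have hm := h.2.2.2 y hy x hx (1/2) (by norm_num) (by norm_num)
  obtain ⟨ε, hε, h1⟩ := h.2.2.1 x hx _ hm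
  refine ⟨ε / 2, by positivity, ?_⟩
  convert h1 using 1
  module

lemma RelInt.unique_aux {P C C' : Set E} (h : RelInt P C) (h' : RelInt P C') : C ⊆ C' := by
  intro x hx
  obtain ⟨y, hy⟩ := h'.1
  obtain ⟨ε, hε, h1⟩ := h.extend hx (h'.2.1 hy)
  have := h'.2.2.2 _ (h.2.1 h1) y hy (ε / (1 + ε)) (by positivity)
    (by rw [div_le_one (by positivity)]; linarith)
  convert this using 1
  have e1 : 1 - ε / (1 + ε) = 1 / (1 + ε) := by field_simp; ring
  have e2 : (1 / (1 + ε)) * (1 + ε) = 1 := by field_simp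
  rw [e1]
  calc x = ((1 / (1 + ε)) * (1 + ε)) • x := by rw [e2, one_smul]
    _ = _ := by rw [div_eq_mul_one_div ε]; module

lemma RelInt.unique {P C C' : Set E} (h : RelInt P C) (h' : RelInt P C') : C = C' :=
  (h.unique_aux h').antisymm (h'.unique_aux h)

lemma RelInt.vectorSpan_eq {P C : Set E} (h : RelInt P C) : vectorSpan ℝ C = vectorSpan ℝ P := by
  apply le_antisymm (vectorSpan_mono ℝ h.2.1)
  obtain ⟨c, hc⟩ := h.1
  rw [vectorSpan_eq_span_vsub_set_right ℝ (h.2.1 hc), Submodule.span_le]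
  rintro _ ⟨p, hp, rfl⟩
  have hm := h.2.2.2 p hp c hc (1/2) (by norm_num) (by norm_num)
  have h1 := vsub_mem_vectorSpan ℝ hm hc
  have h2 := (vectorSpan ℝ C).smul_mem 2 h1
  simp only [vsub_eq_sub, SetLike.mem_coe] at h2 ⊢
  convert h2 using 1
  module

lemma RelInt.image {F : Type*} [AddCommGroup F] [Module ℝ F] {P C : Set E} (h : RelInt P C)
    (f : E →ₗ[ℝ] F) : RelInt (f '' P) (f '' C) := by
  refine ⟨h.1.image f, Set.image_mono h.2.1, ?_, ?_⟩
  · rintro _ ⟨x, hx, rfl⟩ _ ⟨y, hy, rfl⟩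
    obtain ⟨ε, hε, h1⟩ := h.2.2.1 x hx y hy
    exact ⟨ε, hε, _, h1, by simp⟩
  · rintro _ ⟨x, hx, rfl⟩ _ ⟨y, hy, rfl⟩ t ht ht1
    exact ⟨_, h.2.2.2 x hx y hy t ht ht1, by simp⟩

lemma RelInt.singleton (x : E) : RelInt {x} {x} := by
  refine ⟨by simp, subset_rfl, ?_, ?_⟩
  · rintro _ rfl _ rfl
    exact ⟨1, one_pos, by simp⟩
  · rintro _ rfl _ rfl t _ _
    simp only [Set.mem_singleton_iff]
    module

lemma RelInt.prod {F : Type*} [AddCommGroup F] [Module ℝ F] {P C : Set E} {P' C' : Set F}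
    (h : RelInt P C) (h' : RelInt P' C') : RelInt (P ×ˢ P') (C ×ˢ C') := by
  refine ⟨h.1.prod h'.1, Set.prod_mono h.2.1 h'.2.1, ?_, ?_⟩
  · rintro ⟨x, x'⟩ ⟨hx, hx'⟩ ⟨y, y'⟩ ⟨hy, hy'⟩
    obtain ⟨ε, hε, h1⟩ := h.algOpen.dir hx (vsub_mem_vectorSpan ℝ hx hy)
    obtain ⟨ε', hε', h1'⟩ := h'.algOpen.dir hx' (vsub_mem_vectorSpan ℝ hx' hy')
    have h0 : 0 < min ε ε' := by positivity
    exact ⟨min ε ε', h0, h1 _ (by rw [abs_of_pos h0]; exact min_le_left _ _),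
      h1' _ (by rw [abs_of_pos h0]; exact min_le_right _ _)⟩
  · rintro ⟨x, x'⟩ ⟨hx, hx'⟩ ⟨y, y'⟩ ⟨hy, hy'⟩ t ht ht1
    exact ⟨h.2.2.2 x hx y hy t ht ht1, h'.2.2.2 x' hx' y' hy' t ht ht1⟩

lemma RelInt.add {P C P' C' : Set E}
    (h : RelInt P C) (h' : RelInt P' C') : RelInt (P + P') (C + C') := by
  have := (h.prod h').image (LinearMap.fst ℝ E E + LinearMap.snd ℝ E E)
  have e : ∀ A B : Set E, (LinearMap.fst ℝ E E + LinearMap.snd ℝ E E) '' (A ×ˢ B) = A + B := by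
    intro A B
    rw [← Set.add_image_prod]
    rfl
  rwa [e, e] at this

lemma RelInt.smul {P C : Set E} (h : RelInt P C) (r : ℝ) : RelInt (r • P) (r • C) := by
  have := h.image (r • LinearMap.id)
  have e : ∀ A : Set E, (r • LinearMap.id : E →ₗ[ℝ] E) '' A = r • A := by
    intro A
    rw [← Set.image_smul]
    rfl
  rwa [e, e] at this

lemma RelInt.stdSimplex {ι : Type*} [Fintype ι] [Nonempty ι] :
    RelInt (stdSimplex ℝ ι) {x | (∀ i, 0 < x i) ∧ ∑ i, x i = 1} := by
  refine ⟨⟨fun _ => 1 / Fintype.card ι, ?_, ?_⟩, ?_, ?_, ?_⟩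
  · intro i
    have : 0 < Fintype.card ι := Fintype.card_pos
    positivity
  · simp
  · rintro x ⟨h1, h2⟩
    exact ⟨fun i => (h1 i).le, h2⟩
  · rintro x ⟨hx, hx1⟩ y ⟨hy, hy1⟩
    have : ∀ᶠ ε in nhdsWithin (0:ℝ) (Set.Ioi 0), ∀ i, 0 < x i + ε * (x i - y i) := by
      apply Filter.eventually_all.2
      intro i
      apply nhdsWithin_le_nhds
      have hc : ContinuousAt (fun ε : ℝ => x i + ε * (x i - y i)) 0 := by fun_prop
      apply hc.eventually (lt_mem_nhds _)
      simpa using hx i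
    obtain ⟨ε, h1, h2⟩ := (this.and self_mem_nhdsWithin).exists
    refine ⟨ε, h2, h1, ?_⟩
    simp [Finset.sum_add_distrib, ← Finset.mul_sum, hx1, hy1]
  · rintro x ⟨hx, hx1⟩ y ⟨hy, hy1⟩ t ht ht1
    refine ⟨fun i => ?_, ?_⟩
    · have h1 := mul_nonneg (sub_nonneg.2 ht1) (hx i)
      have h2 := mul_pos ht (hy i)
      simp only [Pi.add_apply, Pi.smul_apply, smul_eq_mul]
      linarith
    · simp [Finset.sum_add_distrib, ← Finset.mul_sum, hx1, hy1]

end RelIntSec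

section Intrinsic

variable {E : Type*} [NormedAddCommGroup E] [NormedSpace ℝ E]

lemma mem_intrinsicInterior_iff' {P : Set E} {x : E} : x ∈ intrinsicInterior ℝ P ↔
    x ∈ P ∧ ∀ᶠ y in nhds x, y ∈ affineSpan ℝ P → y ∈ P := by
  constructor
  · intro h
    refine ⟨intrinsicInterior_subset h, ?_⟩
    obtain ⟨y, hy, rfl⟩ := mem_intrinsicInterior.1 h
    rw [mem_interior_iff_mem_nhds, mem_nhds_subtype] at hy
    obtain ⟨u, hu, hu'⟩ := hy
    filter_upwards [hu] with z hz hz'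
    exact hu' (show (⟨z, hz'⟩ : affineSpan ℝ P) ∈ _ from hz)
  · rintro ⟨h1, h2⟩
    refine mem_intrinsicInterior.2 ⟨⟨x, subset_affineSpan ℝ P h1⟩, ?_, rfl⟩
    rw [mem_interior_iff_mem_nhds, mem_nhds_subtype]
    refine ⟨_, h2, ?_⟩
    rintro ⟨z, hz⟩ hz'
    exact hz' hz

lemma relInt_intrinsicInterior [FiniteDimensional ℝ E] {P : Set E} (hP : Convex ℝ P)
    (hne : P.Nonempty) : RelInt P (intrinsicInterior ℝ P) := by
  have key : ∀ p ∈ P, ∀ c ∈ intrinsicInterior ℝ P, ∀ t : ℝ, 0 < t → t ≤ 1 →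
      (1 - t) • p + t • c ∈ intrinsicInterior ℝ P := by
    intro p hp c hc t ht ht1
    rw [mem_intrinsicInterior_iff'] at hc ⊢
    obtain ⟨hc, hc'⟩ := hc
    refine ⟨hP hp hc (sub_nonneg.2 ht1) ht.le (by ring), ?_⟩
    have hcont : Filter.Tendsto (fun y : E => t⁻¹ • (y - p) + p) (nhds ((1 - t) • p + t • c))
        (nhds c) := by
      have : ContinuousAt (fun y : E => t⁻¹ • (y - p) + p) ((1 - t) • p + t • c) := by fun_prop
      convert this.tendsto using 2
      have : (1 - t) • p + t • c - p = t • (c - p) := by module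
      rw [this, smul_smul, inv_mul_cancel₀ ht.ne']
      module
    filter_upwards [hcont.eventually hc'] with y hy hys
    have h1 : t⁻¹ • (y - p) + p ∈ affineSpan ℝ P :=
      AffineSubspace.smul_vsub_vadd_mem _ t⁻¹ hys (subset_affineSpan ℝ P hp)
        (subset_affineSpan ℝ P hp)
    have h2 := hP hp (hy h1) (sub_nonneg.2 ht1) ht.le (by ring)
    convert h2 using 1
    rw [smul_add, smul_smul, mul_inv_cancel₀ ht.ne']
    module
  refine ⟨hne.intrinsicInterior hP, intrinsicInterior_subset, ?_, key⟩
  intro x hx y hy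
  have hx' := mem_intrinsicInterior_iff'.1 hx
  have hcont : Filter.Tendsto (fun ε : ℝ => x + ε • (x - y)) (nhdsWithin 0 (Set.Ioi 0))
      (nhds x) := by
    have : ContinuousAt (fun ε : ℝ => x + ε • (x - y)) 0 := by fun_prop
    have h := this.tendsto.mono_left (nhdsWithin_le_nhds (s := Set.Ioi 0))
    simpa using h
  obtain ⟨ε, h1, h2⟩ := ((hcont.eventually hx'.2).and self_mem_nhdsWithin).exists
  have h2 : 0 < ε := h2
  have h3 : x + ε • (x - y) ∈ affineSpan ℝ P := by
    rw [add_comm]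
    exact AffineSubspace.smul_vsub_vadd_mem _ ε (subset_affineSpan ℝ P hx'.1)
      (subset_affineSpan ℝ P (intrinsicInterior_subset hy)) (subset_affineSpan ℝ P hx'.1)
  refine ⟨ε / 2, by positivity, ?_⟩
  have := key _ (h1 h3) x hx (1/2) (by norm_num) (by norm_num)
  convert this using 1
  module

lemma algBdd_of_isBounded [FiniteDimensional ℝ E] {C : Set E} (h : Bornology.IsBounded C) :
    AlgBdd C := by
  intro l
  have h1 : Bornology.IsBounded (l '' C) := by
    have := h.image (LinearMap.toContinuousLinearMap l)
    simpa using this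
  exact ⟨h1.bddBelow, h1.bddAbove⟩

end Intrinsic

section Simplex

variable {ι : Type*} [Fintype ι] [DecidableEq ι]

/-- Open standard simplex. -/
def oSimplex (ι : Type*) [Fintype ι] : Set (ι → ℝ) := {x | (∀ i, 0 < x i) ∧ ∑ i, x i = 1}

/-- Indicator vector. -/
def indVec (S : Finset ι) : ι → ℝ := fun i => if i ∈ S then 1 else 0

/-- Shifted dilated open simplex. -/
def shSimplex (S : Finset ι) : Set (ι → ℝ) :=
  {indVec S} + ((Fintype.card ι - S.card : ℕ) : ℝ) • oSimplex ι

lemma sum_indVec (S : Finset ι) : ∑ i, indVec S i = S.card := by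
  simp [indVec]

lemma mem_shSimplex_univ [Nonempty ι] (x : ι → ℝ) : x ∈ shSimplex (Finset.univ : Finset ι) ↔ x = 1 := by
  have hne : (oSimplex ι).Nonempty := RelInt.stdSimplex.1
  have : indVec (Finset.univ : Finset ι) = 1 := by ext; simp [indVec]
  simp [shSimplex, Set.zero_smul_set hne, this]

lemma mem_shSimplex (S : Finset ι) (hS : S ≠ Finset.univ) (x : ι → ℝ) :
    x ∈ shSimplex S ↔ (∀ i, indVec S i < x i) ∧ ∑ i, x i = Fintype.card ι := by
  have hlt : S.card < Fintype.card ι := (Finset.card_lt_iff_ne_univ S).2 hS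
  have h0 : (0:ℝ) < ((Fintype.card ι - S.card : ℕ) : ℝ) := by
    exact_mod_cast Nat.sub_pos_of_lt hlt
  have h1 : ((Fintype.card ι - S.card : ℕ) : ℝ) = Fintype.card ι - S.card := by
    rw [Nat.cast_sub hlt.le]
  set r := ((Fintype.card ι - S.card : ℕ) : ℝ)
  have h2 : x ∈ shSimplex S ↔ r⁻¹ • (x - indVec S) ∈ oSimplex ι := by
    rw [shSimplex, Set.singleton_add, Set.mem_image, ← Set.mem_smul_set_iff_inv_smul_mem₀ h0.ne']
    constructor
    · rintro ⟨y, hy, rfl⟩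
      simpa using hy
    · intro h
      exact ⟨_, h, by simp⟩
  rw [h2]
  simp only [oSimplex, Set.mem_ofPred_eq, Pi.smul_apply, Pi.sub_apply, smul_eq_mul]
  rw [← Finset.mul_sum, Finset.sum_sub_distrib, sum_indVec, inv_mul_eq_one₀ h0.ne', h1]
  apply and_congr
  · refine forall_congr' fun i => ?_
    rw [← h1, mul_pos_iff_of_pos_left (inv_pos.2 h0), sub_pos]
  · constructor <;> intro h <;> linarith

/-- sign of the dimension -/
noncomputable def sgS (S : Finset ι) : ℝ := if S = Finset.univ then 1 else (-1) ^ (Fintype.card ι - 1)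

lemma simplex_identity [Nonempty ι] (x : ι → ℝ) :
    ∑ S : Finset ι, ((-1) ^ S.card * sgS S) * (shSimplex S).indicator 1 x = 0 := by
  classical
  have hN : 0 < Fintype.card ι := Fintype.card_pos
  by_cases hx : (∀ i, 0 < x i) ∧ ∑ i, x i = Fintype.card ι
  swap
  · refine Finset.sum_eq_zero fun S _ => ?_
    rw [Set.indicator_of_notMem, mul_zero]
    intro hxS
    apply hx
    by_cases hS : S = Finset.univ
    · rw [hS, mem_shSimplex_univ] at hxS
      simp [hxS]
    · rw [mem_shSimplex S hS] at hxS
      refine ⟨fun i => lt_of_le_of_lt ?_ (hxS.1 i), hxS.2⟩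
      simp only [indVec]; split_ifs <;> norm_num
  obtain ⟨hx0, hx1⟩ := hx
  set T := Finset.univ.filter (fun i => 1 < x i) with hT
  have hTne : T ≠ Finset.univ := by
    intro h
    have : ∑ i : ι, (1:ℝ) < ∑ i, x i := by
      apply Finset.sum_lt_sum_of_nonempty Finset.univ_nonempty
      intro i _
      have : i ∈ T := by rw [h]; simp
      simpa [hT] using this
    rw [hx1] at this
    simp at this
  have hmem : ∀ S : Finset ι, S ≠ Finset.univ → (x ∈ shSimplex S ↔ S ⊆ T) := by
    intro S hS
    rw [mem_shSimplex S hS]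
    constructor
    · rintro ⟨h, -⟩ i hi
      have := h i
      simp only [indVec, hi, if_true] at this
      simpa [hT] using this
    · intro h
      refine ⟨fun i => ?_, hx1⟩
      simp only [indVec]
      split_ifs with hi
      · simpa [hT] using h hi
      · exact hx0 i
  have hone : x = 1 ↔ T = ∅ := by
    constructor
    · intro h
      simp [hT, h]
    · intro h
      have hle : ∀ i ∈ Finset.univ, x i ≤ 1 := by
        intro i _
        by_contra! hi
        have : i ∈ T := by simpa [hT] using hi
        rw [h] at this
        simp at this
      have := (Finset.sum_eq_sum_iff_of_le hle).1 (by simp [hx1])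
      ext i
      exact this i (Finset.mem_univ i)
  rw [← Finset.add_sum_erase _ _ (Finset.mem_univ (Finset.univ : Finset ι))]
  have h1 : ∑ S ∈ (Finset.univ : Finset (Finset ι)).erase Finset.univ,
      ((-1 : ℝ) ^ S.card * sgS S) * (shSimplex S).indicator 1 x =
      (-1) ^ (Fintype.card ι - 1) * ∑ S ∈ T.powerset, (-1 : ℝ) ^ S.card := by
    rw [Finset.mul_sum]
    symm
    apply Finset.sum_subset_zero_on_sdiff
    · intro S hS
      simp only [Finset.mem_powerset] at hS
      simp only [Finset.mem_erase, Finset.mem_univ, and_true]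
      rintro rfl
      exact hTne (Finset.univ_subset_iff.1 hS)
    · intro S hS
      simp only [Finset.mem_sdiff, Finset.mem_erase, Finset.mem_univ, and_true,
        Finset.mem_powerset] at hS
      rw [Set.indicator_of_notMem, mul_zero]
      rw [hmem S hS.1]
      exact hS.2
    · intro S hS
      simp only [Finset.mem_powerset] at hS
      have hSn : S ≠ Finset.univ := by
        rintro rfl
        exact hTne (Finset.univ_subset_iff.1 hS)
      rw [Set.indicator_of_mem ((hmem S hSn).2 hS), sgS, if_neg hSn]
      simp [mul_comm]
  have h2 : ∑ S ∈ T.powerset, (-1 : ℝ) ^ S.card = if T = ∅ then 1 else 0 := by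
    have := Finset.sum_powerset_neg_one_pow_card (x := T)
    exact_mod_cast congrArg (Int.cast : ℤ → ℝ) this
  rw [h1, h2]
  obtain ⟨k, hk⟩ := Nat.exists_eq_succ_of_ne_zero hN.ne'
  simp only [Set.indicator_apply, mem_shSimplex_univ, hone, sgS, if_true, Finset.card_univ, hk]
  split_ifs
  · simp [pow_succ]
  · simp

lemma vectorSpan_prod {E F : Type*} [AddCommGroup E] [Module ℝ E] [AddCommGroup F] [Module ℝ F]
    {A : Set E} {B : Set F} (hA : A.Nonempty) (hB : B.Nonempty) :
    vectorSpan ℝ (A ×ˢ B) = (vectorSpan ℝ A).prod (vectorSpan ℝ B) := by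
  apply le_antisymm
  · rw [vectorSpan_def, Submodule.span_le]
    rintro _ ⟨⟨a, b⟩, ⟨ha, hb⟩, ⟨a', b'⟩, ⟨ha', hb'⟩, rfl⟩
    exact ⟨vsub_mem_vectorSpan ℝ ha ha', vsub_mem_vectorSpan ℝ hb hb'⟩
  · obtain ⟨a0, ha0⟩ := hA
    obtain ⟨b0, hb0⟩ := hB
    rw [Submodule.prod_le_iff]
    constructor
    · rw [vectorSpan_def ℝ A, Submodule.map_span_le]
      rintro _ ⟨a, ha, a', ha', rfl⟩
      have := vsub_mem_vectorSpan ℝ (s := A ×ˢ B) (p₁ := (a, b0)) (p₂ := (a', b0)) ⟨ha, hb0⟩ ⟨ha', hb0⟩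
      simpa using this
    · rw [vectorSpan_def ℝ B, Submodule.map_span_le]
      rintro _ ⟨a, ha, a', ha', rfl⟩
      have := vsub_mem_vectorSpan ℝ (s := A ×ˢ B) (p₁ := (a0, a)) (p₂ := (a0, a')) ⟨ha0, ha⟩ ⟨ha0, ha'⟩
      simpa using this

lemma finrank_prod_submodule {E F : Type*} [AddCommGroup E] [Module ℝ E] [AddCommGroup F] [Module ℝ F]
    [FiniteDimensional ℝ E] [FiniteDimensional ℝ F] (p : Submodule ℝ E) (q : Submodule ℝ F) :
    Module.finrank ℝ (p.prod q) = Module.finrank ℝ p + Module.finrank ℝ q := by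
  rw [← Module.finrank_prod]
  apply LinearEquiv.finrank_eq
  exact { toFun := fun x => (⟨x.1.1, x.2.1⟩, ⟨x.1.2, x.2.2⟩)
          invFun := fun y => ⟨(y.1, y.2), y.1.2, y.2.2⟩
          map_add' := fun _ _ => rfl
          map_smul' := fun _ _ => rfl
          left_inv := fun _ => rfl
          right_inv := fun _ => rfl }

lemma vectorSpan_singleton_add {E : Type*} [AddCommGroup E] [Module ℝ E] (v : E) (A : Set E) :
    vectorSpan ℝ ({v} + A) = vectorSpan ℝ A := by
  rw [Set.singleton_add]
  exact vectorSpan_vadd ℝ A v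

lemma finrank_vectorSpan_smul {E : Type*} [AddCommGroup E] [Module ℝ E] {r : ℝ} (hr : r ≠ 0) (A : Set E) :
    Module.finrank ℝ (vectorSpan ℝ (r • A)) = Module.finrank ℝ (vectorSpan ℝ A) := by
  have e : (r • LinearMap.id : E →ₗ[ℝ] E) '' A = r • A := by
    rw [← Set.image_smul]; rfl
  rw [← e, vectorSpan_linear_image]
  refine (Submodule.equivMapOfInjective _ ?_ _).finrank_eq.symm
  intro x y h
  exact smul_right_injective E hr h

lemma finrank_oSimplex [Nonempty ι] :
    Module.finrank ℝ (vectorSpan ℝ (oSimplex ι)) = Fintype.card ι - 1 := by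
  set l : Module.Dual ℝ (ι → ℝ) := ∑ i, LinearMap.proj i with hl
  have hlx : ∀ x, l x = ∑ i, x i := by intro x; simp [hl]
  have hl0 : l ≠ 0 := by
    intro h
    have := hlx 1
    rw [h] at this
    simp only [LinearMap.zero_apply, Pi.one_apply, Finset.sum_const, Finset.card_univ, nsmul_eq_mul,
      mul_one] at this
    exact Fintype.card_ne_zero (α := ι) (by exact_mod_cast this.symm)
  have h1 := Module.Dual.finrank_ker_add_one_of_ne_zero hl0
  rw [Module.finrank_fintype_fun_eq_card] at h1
  suffices vectorSpan ℝ (oSimplex ι) = LinearMap.ker l by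
    rw [this]; omega
  apply le_antisymm
  · rw [vectorSpan_def, Submodule.span_le]
    rintro _ ⟨x, hx, y, hy, rfl⟩
    simp [hlx, hx.2, hy.2]
  · intro w hw
    have hw0 : ∑ i, w i = 0 := by rw [← hlx]; exact hw
    obtain ⟨x, hx⟩ : (oSimplex ι).Nonempty := RelInt.stdSimplex.1
    have : ∀ᶠ ε in nhdsWithin (0:ℝ) (Set.Ioi 0), ∀ i, 0 < x i + ε * w i := by
      apply Filter.eventually_all.2
      intro i
      apply nhdsWithin_le_nhds
      have hc : ContinuousAt (fun ε : ℝ => x i + ε * w i) 0 := by fun_prop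
      apply hc.eventually (lt_mem_nhds _)
      simpa using hx.1 i
    obtain ⟨ε, h1, h2⟩ := (this.and self_mem_nhdsWithin).exists
    have h2 : 0 < ε := h2
    have hy : x + ε • w ∈ oSimplex ι := by
      refine ⟨h1, ?_⟩
      simp [Finset.sum_add_distrib, ← Finset.mul_sum, hw0, hx.2]
    have h3 := (vectorSpan ℝ (oSimplex ι)).smul_mem ε⁻¹ (vsub_mem_vectorSpan ℝ hy hx)
    rwa [vsub_eq_sub, add_sub_cancel_left, smul_smul, inv_mul_cancel₀ h2.ne', one_smul] at h3

lemma sgS_eq [Nonempty ι] (S : Finset ι) :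
    (-1 : ℝ) ^ Module.finrank ℝ (vectorSpan ℝ (shSimplex S)) = sgS S := by
  rw [shSimplex, vectorSpan_singleton_add]
  by_cases hS : S = Finset.univ
  · have hne : (oSimplex ι).Nonempty := RelInt.stdSimplex.1
    have h0 : ((Fintype.card ι - (Finset.univ : Finset ι).card : ℕ) : ℝ) = 0 := by simp
    rw [hS, h0]
    rw [Set.zero_smul_set hne]
    rw [← Set.singleton_zero, vectorSpan_singleton]
    simp [sgS]
  · have hlt : S.card < Fintype.card ι := (Finset.card_lt_iff_ne_univ S).2 hS
    rw [finrank_vectorSpan_smul, finrank_oSimplex, sgS, if_neg hS]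
    have := Nat.sub_pos_of_lt hlt
    positivity

lemma relInt_shSimplex [Nonempty ι] (S : Finset ι) :
    RelInt ({indVec S} + ((Fintype.card ι - S.card : ℕ) : ℝ) • stdSimplex ℝ ι) (shSimplex S) :=
  (RelInt.singleton _).add (RelInt.stdSimplex.smul _)

end Simplex

section Identity

/-- The indicator identity for Minkowski sums. -/
lemma indicator_identity {E : Type*} [NormedAddCommGroup E] [NormedSpace ℝ E] [FiniteDimensional ℝ E]
    {ι : Type*} [Fintype ι] [DecidableEq ι] [Nonempty ι] (v : ι → E) (Q : Set E) (hQ : Convex ℝ Q)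
    (hQn : Q.Nonempty) (hQb : Bornology.IsBounded Q) (P : Set E)
    (hP : P = (fun w : ι → ℝ => ∑ i, w i • v i) '' stdSimplex ℝ ι) (y : E) :
    ∑ S : Finset ι, (-1 : ℝ) ^ S.card *
      ((-1) ^ Module.finrank ℝ (vectorSpan ℝ
        (Q + ({∑ i ∈ S, v i} + ((Fintype.card ι - S.card : ℕ) : ℝ) • P))) *
      (intrinsicInterior ℝ
        (Q + ({∑ i ∈ S, v i} + ((Fintype.card ι - S.card : ℕ) : ℝ) • P))).indicator 1 y) = 0 := by
  classical
  set g : (ι → ℝ) →ₗ[ℝ] E := ∑ i, (LinearMap.proj i).smulRight (v i) with hg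
  have hgx : ∀ w, g w = ∑ i, w i • v i := by intro w; simp [hg]
  have hPg : P = g '' stdSimplex ℝ ι := by
    rw [hP]; congr 1; ext w; rw [hgx]
  have hPconv : Convex ℝ P := by rw [hPg]; exact (convex_stdSimplex ℝ ι).linear_image g
  set Q' := intrinsicInterior ℝ Q
  have hQ' : RelInt Q Q' := relInt_intrinsicInterior hQ hQn
  set f : E × (ι → ℝ) →ₗ[ℝ] E := LinearMap.coprod LinearMap.id g with hf
  have hfim : ∀ A B, f '' (A ×ˢ B) = A + g '' B := by
    intro A B
    ext x
    simp only [Set.mem_image, Set.mem_prod, Set.mem_add, Prod.exists, hf, LinearMap.coprod_apply,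
      LinearMap.id_apply]
    constructor
    · rintro ⟨a, b, ⟨ha, hb⟩, rfl⟩
      exact ⟨a, ha, _, ⟨b, hb, rfl⟩, rfl⟩
    · rintro ⟨a, ha, _, ⟨b, hb, rfl⟩, rfl⟩
      exact ⟨a, b, ⟨ha, hb⟩, rfl⟩
  have hR : ∀ S : Finset ι, RelInt (Q + ({∑ i ∈ S, v i} + ((Fintype.card ι - S.card : ℕ) : ℝ) • P))
      (f '' (Q' ×ˢ shSimplex S)) := by
    intro S
    have := (hQ'.prod (relInt_shSimplex S)).image f
    rw [hfim Q] at this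
    convert this using 2
    have hsm : ∀ (r : ℝ) (s : Set (ι → ℝ)), g '' (r • s) = r • (g '' s) := by
      intro r s
      rw [← Set.image_smul, ← Set.image_smul, Set.image_image, Set.image_image]
      simp
    rw [Set.image_add, Set.image_singleton, hsm, ← hPg, hgx]
    congr 2
    simp [indVec]
  have hconv : ∀ S : Finset ι,
      intrinsicInterior ℝ (Q + ({∑ i ∈ S, v i} + ((Fintype.card ι - S.card : ℕ) : ℝ) • P)) =
        f '' (Q' ×ˢ shSimplex S) := by
    intro S
    refine (relInt_intrinsicInterior ?_ ?_).unique (hR S)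
    · exact hQ.add ((convex_singleton _).add (hPconv.smul _))
    · exact (hR S).1.mono (hR S).2.1
  have hb : ∀ S : Finset ι, Bornology.IsBounded (shSimplex S) := by
    intro S
    have h1 : Bornology.IsBounded (stdSimplex ℝ ι) := (isCompact_stdSimplex ℝ ι).isBounded
    exact ((Bornology.isBounded_singleton).add (h1.smul₀ _)).subset (relInt_shSimplex S).2.1
  have main := euler_main _ f (fun S : Finset ι => (-1) ^ S.card * sgS S) (fun S => Q' ×ˢ shSimplex S)
    (fun S => (hQ'.prod (relInt_shSimplex S)).algOpen)
    (fun S => algBdd_of_isBounded ((hQb.subset hQ'.2.1).prod (hb S)))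
    (by
      rintro ⟨q, x⟩
      have h1 : ∀ S : Finset ι, (Q' ×ˢ shSimplex S).indicator (1 : E × (ι → ℝ) → ℝ) (q, x) =
          (shSimplex S).indicator 1 x * Q'.indicator 1 q := by
        intro S
        by_cases h1 : q ∈ Q' <;> by_cases h2 : x ∈ shSimplex S <;>
          simp [h1, h2]
      simp_rw [h1, ← mul_assoc]
      rw [← Finset.sum_mul, simplex_identity, zero_mul]) rfl y
  have hd : ∀ S : Finset ι, (-1 : ℝ) ^ Module.finrank ℝ (vectorSpan ℝ (Q' ×ˢ shSimplex S)) =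
      (-1) ^ Module.finrank ℝ (vectorSpan ℝ Q') * sgS S := by
    intro S
    rw [vectorSpan_prod hQ'.1 (relInt_shSimplex S).1, finrank_prod_submodule, pow_add, sgS_eq]
  have hs2 : ∀ S : Finset ι, sgS S * sgS S = 1 := by
    intro S
    rw [← sgS_eq, ← mul_pow]
    simp
  have hq2 : (-1 : ℝ) ^ Module.finrank ℝ (vectorSpan ℝ Q') * (-1 : ℝ) ^ Module.finrank ℝ (vectorSpan ℝ Q') = 1 := by
    rw [← mul_pow]; simp
  have : ((-1 : ℝ) ^ Module.finrank ℝ (vectorSpan ℝ Q')) * 0 = 0 := mul_zero _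
  rw [← this]
  rw [← main]
  rw [Finset.mul_sum]
  refine Finset.sum_congr rfl fun S _ => ?_
  rw [hd, hconv, ← (hR S).vectorSpan_eq]
  linear_combination (-((-1 : ℝ) ^ S.card *
      ((-1) ^ Module.finrank ℝ (vectorSpan ℝ (f '' (Q' ×ˢ shSimplex S))) *
      (f '' (Q' ×ˢ shSimplex S)).indicator 1 y))) * ((-1 : ℝ) ^ Module.finrank ℝ (vectorSpan ℝ Q') * (-1 : ℝ) ^ Module.finrank ℝ (vectorSpan ℝ Q') *
        hs2 S + hq2)

end Identity

section Lattice

/-- Signed number of relative interior lattice points. -/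
noncomputable def phi {n : ℕ} (A : Set (Fin n → ℝ)) : ℝ :=
  (-1) ^ adim A * (relintLat A).ncard

lemma adim_eq {n : ℕ} (A : Set (Fin n → ℝ)) : adim A = Module.finrank ℝ (vectorSpan ℝ A) := by
  rw [adim, direction_affineSpan]

lemma finite_lattice {n : ℕ} {A : Set (Fin n → ℝ)} (hA : Bornology.IsBounded A) :
    {x ∈ A | IsLatticePt x}.Finite := by
  obtain ⟨R, hR⟩ := hA.exists_norm_le
  have hf : (Set.Icc (fun _ : Fin n => -⌈R⌉) (fun _ => ⌈R⌉)).Finite := Set.finite_Icc _ _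
  refine (hf.image (fun (z : Fin n → ℤ) i => (z i : ℝ))).subset ?_
  rintro x ⟨hx, hl⟩
  choose z hz using hl
  refine ⟨z, ?_, by ext i; exact (hz i).symm⟩
  have h1 : ∀ i, |(z i : ℝ)| ≤ R := by
    intro i
    rw [← hz, ← Real.norm_eq_abs]
    exact (norm_le_pi_norm x i).trans (hR x hx)
  constructor
  · intro i
    have := (abs_le.1 (h1 i)).1
    have h2 := Int.le_ceil R
    show -⌈R⌉ ≤ z i
    have : (-⌈R⌉ : ℝ) ≤ z i := by linarith
    exact_mod_cast this
  · intro i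
    have := (abs_le.1 (h1 i)).2
    have h2 := Int.le_ceil R
    show z i ≤ ⌈R⌉
    have : (z i : ℝ) ≤ ⌈R⌉ := by linarith
    exact_mod_cast this

lemma ncard_relintLat {n : ℕ} {A : Set (Fin n → ℝ)} (L : Finset (Fin n → ℝ))
    (h1 : ∀ x ∈ L, IsLatticePt x) (h2 : relintLat A ⊆ L) :
    ((relintLat A).ncard : ℝ) = ∑ x ∈ L, (intrinsicInterior ℝ A).indicator 1 x := by
  classical
  have : relintLat A = (L.filter (fun x => x ∈ intrinsicInterior ℝ A) : Finset (Fin n → ℝ)) := by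
    ext x
    simp only [Finset.coe_filter, Set.mem_ofPred_eq]
    constructor
    · intro hx
      exact ⟨h2 hx, hx.1⟩
    · rintro ⟨hx, hx'⟩
      exact ⟨hx', h1 x hx⟩
  rw [this, Set.ncard_coe_finset, Finset.card_filter]
  push_cast
  refine Finset.sum_congr rfl fun x _ => ?_
  rw [Set.indicator_apply]
  rfl

lemma IsLatticePt.add {n : ℕ} {x y : Fin n → ℝ} (hx : IsLatticePt x) (hy : IsLatticePt y) :
    IsLatticePt (x + y) := by
  intro i
  obtain ⟨a, ha⟩ := hx i
  obtain ⟨b, hb⟩ := hy i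
  exact ⟨a + b, by simp [ha, hb]⟩

lemma IsLatticePt.neg {n : ℕ} {x : Fin n → ℝ} (hx : IsLatticePt x) :
    IsLatticePt (-x) := by
  intro i
  obtain ⟨a, ha⟩ := hx i
  exact ⟨-a, by simp [ha]⟩

lemma IsLatticePt.sum {n : ℕ} {ι : Type*} (s : Finset ι) {x : ι → Fin n → ℝ}
    (hx : ∀ i ∈ s, IsLatticePt (x i)) : IsLatticePt (∑ i ∈ s, x i) := by
  intro j
  have h : ∀ i, ∃ z : ℤ, i ∈ s → x i j = z := by
    intro i
    by_cases hi : i ∈ s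
    · obtain ⟨z, hz⟩ := hx i hi j
      exact ⟨z, fun _ => hz⟩
    · exact ⟨0, fun h => absurd h hi⟩
  choose z hz using h
  refine ⟨∑ i ∈ s, z i, ?_⟩
  rw [Finset.sum_apply]
  push_cast
  exact Finset.sum_congr rfl hz

lemma phi_translate {n : ℕ} {A : Set (Fin n → ℝ)} (hA : Convex ℝ A) (hne : A.Nonempty)
    {v : Fin n → ℝ} (hv : IsLatticePt v) : phi ({v} + A) = phi A := by
  have h1 : intrinsicInterior ℝ ({v} + A) = {v} + intrinsicInterior ℝ A :=
    (relInt_intrinsicInterior ((convex_singleton v).add hA) ((Set.singleton_nonempty v).add hne)).unique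
      ((RelInt.singleton v).add (relInt_intrinsicInterior hA hne))
  have h2 : relintLat ({v} + A) = (fun x => v + x) '' relintLat A := by
    ext x
    constructor
    · rintro ⟨hx, hl⟩
      rw [h1, Set.singleton_add] at hx
      obtain ⟨y, hy, rfl⟩ := hx
      refine ⟨y, ⟨hy, ?_⟩, rfl⟩
      have := hv.neg.add hl
      simpa using this
    · rintro ⟨y, ⟨hy, hl⟩, rfl⟩
      refine ⟨?_, hv.add hl⟩
      rw [h1, Set.singleton_add]
      exact ⟨y, hy, rfl⟩
  rw [phi, phi, h2, Set.ncard_image_of_injective _ (add_right_injective v), adim_eq, adim_eq,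
    vectorSpan_singleton_add]

lemma phi_rec {n : ℕ} (V : Finset (Fin n → ℝ)) (hV : V.Nonempty) (hl : ∀ v ∈ V, IsLatticePt v)
    (Q : Set (Fin n → ℝ)) (hQ : Convex ℝ Q)
    (hQn : Q.Nonempty) (hQb : Bornology.IsBounded Q) :
    ∑ j ∈ Finset.range (V.card + 1), (-1 : ℝ) ^ j * (V.card.choose j : ℝ) *
      phi (Q + ((V.card - j : ℕ) : ℝ) • convexHull ℝ (V : Set (Fin n → ℝ))) = 0 := by
  classical
  set P := convexHull ℝ (V : Set (Fin n → ℝ)) with hP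
  have hPc : Convex ℝ P := convex_convexHull ℝ _
  have hPn : P.Nonempty := (Finset.coe_nonempty.2 hV).convexHull
  have hPb : Bornology.IsBounded P := (V.finite_toSet.isCompact_convexHull ℝ).isBounded
  have : Nonempty V := hV.to_subtype
  have hPim : P = (fun w : V → ℝ => ∑ i, w i • (i : Fin n → ℝ)) '' stdSimplex ℝ V := by
    ext x
    rw [hP, Finset.mem_convexHull']
    constructor
    · rintro ⟨w, h1, h2, h3⟩
      refine ⟨fun i => w i, ⟨fun i => h1 i i.2, ?_⟩, ?_⟩
      · rw [← h2, ← Finset.sum_coe_sort V]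
      · rw [← h3, ← Finset.sum_coe_sort V]
    · rintro ⟨w, ⟨h1, h2⟩, h3⟩
      refine ⟨fun y => if h : y ∈ V then w ⟨y, h⟩ else 0, ?_, ?_, ?_⟩
      · intro y hy
        simp only [hy, dif_pos]
        exact h1 _
      · rw [← h2, ← Finset.sum_coe_sort V]
        simp
      · rw [← h3, ← Finset.sum_coe_sort V]
        simp
  have hind := indicator_identity (fun i : V => (i : Fin n → ℝ)) Q hQ hQn hQb P hPim
  set A : Finset V → Set (Fin n → ℝ) := fun S =>
    Q + ({∑ i ∈ S, (i : Fin n → ℝ)} + ((V.card - S.card : ℕ) : ℝ) • P) with hA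
  have hAb : ∀ S, Bornology.IsBounded (A S) := fun S =>
    hQb.add (Bornology.isBounded_singleton.add (hPb.smul₀ _))
  have hAf : ∀ S, (relintLat (A S)).Finite := fun S =>
    (finite_lattice (hAb S)).subset fun x hx => ⟨intrinsicInterior_subset hx.1, hx.2⟩
  set L : Finset (Fin n → ℝ) := Finset.univ.biUnion fun S => (hAf S).toFinset with hL
  have hL1 : ∀ x ∈ L, IsLatticePt x := by
    intro x hx
    simp only [hL, Finset.mem_biUnion, Finset.mem_univ, true_and, Set.Finite.mem_toFinset] at hx
    obtain ⟨S, hS⟩ := hx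
    exact hS.2
  have hL2 : ∀ S, relintLat (A S) ⊆ L := by
    intro S x hx
    simp only [hL, Finset.mem_coe, Finset.mem_biUnion, Finset.mem_univ, true_and, Set.Finite.mem_toFinset]
    exact ⟨S, hx⟩
  have h1 : ∑ S : Finset V, (-1 : ℝ) ^ S.card * phi (A S) = 0 := by
    simp_rw [phi, ncard_relintLat L hL1 (hL2 _), Finset.mul_sum]
    rw [Finset.sum_comm]
    refine Finset.sum_eq_zero fun x _ => ?_
    rw [← hind x]
    refine Finset.sum_congr rfl fun S _ => ?_
    rw [adim_eq, Fintype.card_coe]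
  have h2 : ∀ S : Finset V, phi (A S) = phi (Q + ((V.card - S.card : ℕ) : ℝ) • P) := by
    intro S
    have : A S = {∑ i ∈ S, (i : Fin n → ℝ)} + (Q + ((V.card - S.card : ℕ) : ℝ) • P) := by
      simp only [hA]
      rw [← add_assoc, ← add_assoc, add_comm Q]
    rw [this]
    exact phi_translate (hQ.add (hPc.smul _)) (hQn.add hPn.smul_set)
      (IsLatticePt.sum S fun i _ => hl i i.2)
  simp_rw [h2] at h1
  have h3 := Finset.sum_powerset_apply_card (fun j => (-1 : ℝ) ^ j * phi (Q + ((V.card - j : ℕ) : ℝ) • P))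
    (x := (Finset.univ : Finset V))
  rw [Finset.powerset_univ, h1, Finset.card_univ, Fintype.card_coe] at h3
  rw [h3]
  refine Finset.sum_congr rfl fun j _ => ?_
  rw [nsmul_eq_mul]
  ring

/-- The counting function on multiples. -/
noncomputable def GG {n : ℕ} (P : Fin n → Set (Fin n → ℝ)) (t : Fin n → ℕ) : ℝ :=
  phi (∑ i, (t i : ℝ) • P i)

lemma sum_shift {n : ℕ} (P : Fin n → Set (Fin n → ℝ)) (hc : ∀ i, Convex ℝ (P i))
    (hn : ∀ i, (P i).Nonempty) (t : Fin n → ℕ) (i : Fin n) (k : ℕ) :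
    ∑ j, ((t + k • Pi.single i 1 : Fin n → ℕ) j : ℝ) • P j = ∑ j, (t j : ℝ) • P j + (k : ℝ) • P i := by
  have h1 : ∀ j, ((t + k • Pi.single i 1 : Fin n → ℕ) j : ℝ) • P j =
      (t j : ℝ) • P j + (if j = i then (k : ℝ) else 0) • P j := by
    intro j
    rw [← (hc j).add_smul (by positivity) (by split_ifs <;> positivity)]
    congr 1
    by_cases h : j = i
    · subst h; simp
    · simp [h]
  simp_rw [h1, Finset.sum_add_distrib]
  congr 1
  rw [Finset.sum_eq_single_of_mem i (Finset.mem_univ i)]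
  · simp
  · intro j _ hj
    simp [hj, Set.zero_smul_set (hn j)]

lemma sum_props {n : ℕ} (P : Fin n → Set (Fin n → ℝ)) (hc : ∀ i, Convex ℝ (P i))
    (hn : ∀ i, (P i).Nonempty) (hb : ∀ i, IsCompact (P i)) (t : Fin n → ℝ) (s : Finset (Fin n)) :
    Convex ℝ (∑ j ∈ s, t j • P j) ∧ (∑ j ∈ s, t j • P j).Nonempty ∧ IsCompact (∑ j ∈ s, t j • P j) := by
  induction s using Finset.induction_on with
  | empty => 
    simp only [Finset.sum_empty]
    exact ⟨convex_singleton 0, ⟨0, rfl⟩, isCompact_singleton⟩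
  | insert a s ha ih =>
    rw [Finset.sum_insert ha]
    exact ⟨((hc a).smul _).add ih.1, (hn a).smul_set.add ih.2.1, ((hb a).smul _).add ih.2.2⟩

lemma GG_fwdDiff {n : ℕ} (P : Fin n → Set (Fin n → ℝ)) (hP : ∀ i, IsLatticePolytope (P i))
    (i : Fin n) : ∃ N : ℕ, ∀ t, (fwdDiff (Pi.single i 1))^[N] (GG P) t = 0 := by
  choose V hV1 hV2 hV3 using hP
  have hc : ∀ i, Convex ℝ (P i) := fun i => by rw [hV3]; exact convex_convexHull ℝ _
  have hn : ∀ i, (P i).Nonempty := fun i => by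
    rw [hV3]; exact (Finset.coe_nonempty.2 (hV1 i)).convexHull
  have hb : ∀ i, IsCompact (P i) := fun i => by
    rw [hV3]; exact (V i).finite_toSet.isCompact_convexHull ℝ
  refine ⟨(V i).card, fun t => ?_⟩
  obtain ⟨h1, h2, h3⟩ := sum_props P hc hn hb (fun j => (t j : ℝ)) Finset.univ
  have := phi_rec (V i) (hV1 i) (hV2 i) _ h1 h2 h3.isBounded
  rw [← hV3, ← Finset.sum_range_reflect] at this
  rw [fwdDiff_iter_eq_sum_shift, ← this]
  refine Finset.sum_congr rfl fun k hk => ?_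
  have hk' : k ≤ (V i).card := by simpa [Nat.lt_succ_iff] using hk
  rw [GG, sum_shift P hc hn]
  have e1 : (V i).card + 1 - 1 - k = (V i).card - k := by omega
  have e2 : (V i).card - ((V i).card - k) = k := by omega
  rw [e1, e2, Nat.choose_symm hk', zsmul_eq_mul]
  push_cast
  ring

end Lattice

section PolyLemma

lemma fwdDiff_comm' {M : Type*} [AddCommMonoid M] (h h' : M) :
    Function.Commute (fwdDiff (G := ℝ) h) (fwdDiff h') := by
  intro f
  ext t
  simp only [fwdDiff]
  rw [add_right_comm t h h']
  ring

lemma fwdDiff_iter_zero' {M : Type*} [AddCommMonoid M] (h : M) (k : ℕ) :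
    (fwdDiff (G := ℝ) h)^[k] (fun _ => 0) = fun _ => 0 := by
  ext t
  rw [fwdDiff_iter_eq_sum_shift]
  simp

lemma exists_poly_of_fwdDiff (n : ℕ) : ∀ (G : (Fin n → ℕ) → ℝ)
    (_ : ∀ i : Fin n, ∃ N : ℕ, ∀ t, (fwdDiff (Pi.single i 1))^[N] G t = 0),
    ∃ p : MvPolynomial (Fin n) ℝ, ∀ t : Fin n → ℕ, G t = MvPolynomial.eval (fun i => (t i : ℝ)) p := by
  induction n with
  | zero =>
    intro G _
    refine ⟨MvPolynomial.C (G 0), fun t => ?_⟩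
    rw [MvPolynomial.eval_C, Subsingleton.elim t 0]
  | succ n ih =>
    intro G hG
    obtain ⟨N, hN⟩ := hG 0
    have hN' : ∀ k, N ≤ k → ∀ t, (fwdDiff (Pi.single 0 1))^[k] G t = 0 := by
      intro k hk t
      obtain ⟨m, rfl⟩ := Nat.exists_eq_add_of_le' hk
      rw [Function.iterate_add_apply]
      have : (fwdDiff (Pi.single 0 1))^[N] G = fun _ => 0 := funext hN
      rw [this, fwdDiff_iter_zero']
    have hH : ∀ k, ∃ p : MvPolynomial (Fin n) ℝ, ∀ s : Fin n → ℕ,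
        (fwdDiff (Pi.single 0 1))^[k] G (Fin.cons 0 s) = MvPolynomial.eval (fun i => (s i : ℝ)) p := by
      intro k
      apply ih (fun s => (fwdDiff (Pi.single 0 1))^[k] G (Fin.cons 0 s))
      intro i
      obtain ⟨M, hM⟩ := hG i.succ
      refine ⟨M, fun s => ?_⟩
      have h1 : (fwdDiff (Pi.single i 1))^[M]
          (fun s : Fin n → ℕ => (fwdDiff (Pi.single 0 1))^[k] G (Fin.cons 0 s)) s =
          (fwdDiff (Pi.single i.succ 1))^[M] ((fwdDiff (Pi.single 0 1))^[k] G) (Fin.cons 0 s) := by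
        rw [fwdDiff_iter_eq_sum_shift, fwdDiff_iter_eq_sum_shift]
        refine Finset.sum_congr rfl fun j _ => ?_
        have hs : (Fin.cons 0 (s + j • Pi.single i 1) : Fin (n + 1) → ℕ) =
            Fin.cons 0 s + j • Pi.single i.succ 1 := by
          ext l
          refine Fin.cases ?_ (fun l => ?_) l
          · simp
          · simp [Pi.single_apply]
        simp only [hs]
      rw [h1, (Function.Commute.iterate_iterate (fwdDiff_comm' _ _) M k).eq]
      have : (fwdDiff (Pi.single i.succ 1))^[M] G = fun _ => 0 := funext hM
      rw [this, fwdDiff_iter_zero']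
    choose p hp using hH
    refine ⟨∑ k ∈ Finset.range N, MvPolynomial.C ((k.factorial : ℝ)⁻¹) *
      Polynomial.aeval (MvPolynomial.X 0) (descPochhammer ℝ k) * MvPolynomial.rename Fin.succ (p k),
      fun t => ?_⟩
    have ht : t = Fin.cons 0 (Fin.tail t) + t 0 • Pi.single 0 1 := by
      ext l
      refine Fin.cases ?_ (fun l => ?_) l
      · simp
      · simp [Fin.tail]
    have h1 : G t = ∑ k ∈ Finset.range N, ((t 0).choose k : ℝ) *
        (fwdDiff (Pi.single 0 1))^[k] G (Fin.cons 0 (Fin.tail t)) := by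
      conv_lhs => rw [ht]
      rw [shift_eq_sum_fwdDiff_iter (Pi.single 0 1) G]
      simp_rw [nsmul_eq_mul]
      rcases le_total (t 0 + 1) N with h | h
      · refine Finset.sum_subset (Finset.range_mono h) fun k _ hk => ?_
        rw [Nat.choose_eq_zero_of_lt (by simpa using hk)]
        simp
      · refine (Finset.sum_subset (Finset.range_mono h) fun k _ hk => ?_).symm
        rw [hN' k (by simpa using hk)]
        simp
    rw [h1, map_sum]
    refine Finset.sum_congr rfl fun k _ => ?_
    rw [map_mul, map_mul, MvPolynomial.eval_C, MvPolynomial.eval_rename, hp]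
    have h2 : MvPolynomial.eval (fun i => (t i : ℝ))
        (Polynomial.aeval (MvPolynomial.X 0 : MvPolynomial (Fin (n+1)) ℝ) (descPochhammer ℝ k)) =
        k.factorial * (t 0).choose k := by
      rw [← Nat.cast_mul, ← Nat.descFactorial_eq_factorial_mul_choose,
        ← descPochhammer_eval_eq_descFactorial]
      have h3 := Polynomial.aeval_algHom_apply (MvPolynomial.aeval (R := ℝ) (fun i => (t i : ℝ)))
        (MvPolynomial.X 0 : MvPolynomial (Fin (n+1)) ℝ) (descPochhammer ℝ k)
      rw [MvPolynomial.aeval_X] at h3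
      rw [← Polynomial.coe_aeval_eq_eval, h3]
      rfl
    rw [h2, inv_mul_cancel_left₀ (by positivity)]
    rfl

end PolyLemma

section Asymp
open Filter Topology

lemma lattice_iff {n : ℕ} (x : Fin n → ℝ) :
    x ∈ (Submodule.span ℤ (Set.range (Pi.basisFun ℝ (Fin n))) : Set (Fin n → ℝ)) ↔ IsLatticePt x := by
  rw [SetLike.mem_coe, Module.Basis.mem_span_iff_repr_mem ℤ (Pi.basisFun ℝ (Fin n)) x]
  simp [IsLatticePt, eq_comm]

lemma phi_asymp {n : ℕ} {P : Set (Fin n → ℝ)} (hc : Convex ℝ P) (hne : P.Nonempty)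
    (hb : Bornology.IsBounded P) :
    Tendsto (fun N : ℕ => phi ((N : ℝ) • P) / (N : ℝ) ^ n) atTop
      (𝓝 ((-1) ^ n * (volume P).toReal)) := by
  set C := intrinsicInterior ℝ P with hC
  have hR : RelInt P C := relInt_intrinsicInterior hc hne
  have hCc : Convex ℝ C := hR.algOpen.1
  have hcl : IsClosed (intrinsicFrontier ℝ P) :=
    isClosed_intrinsicFrontier (AffineSubspace.closed_of_finiteDimensional _)
  have hCm : MeasurableSet C := by
    rw [hC, ← closure_sdiff_intrinsicFrontier]
    exact isClosed_closure.measurableSet.diff hcl.measurableSet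
  have hvol : volume P = volume C := by
    apply le_antisymm _ (measure_mono intrinsicInterior_subset)
    have h1 : P ⊆ C ∪ frontier P := by
      intro x hx
      by_cases hxc : x ∈ C
      · exact Or.inl hxc
      · right
        apply intrinsicFrontier_subset_frontier (𝕜 := ℝ)
        rw [← closure_sdiff_intrinsicInterior]
        exact ⟨subset_closure hx, hxc⟩
    refine (measure_mono h1).trans ((measure_union_le _ _).trans ?_)
    rw [hc.addHaar_frontier volume, add_zero]
  have hlim := tendsto_card_div_pow_atTop_volume C (hb.subset intrinsicInterior_subset) hCm
    (hCc.addHaar_frontier volume)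
  have hsgn : (-1 : ℝ) ^ n * (volume P).toReal = (-1 : ℝ) ^ adim P * volume.real C := by
    rw [hvol]
    by_cases h : adim P = n
    · rw [h]; rfl
    · have : volume P = 0 := by
        refine measure_mono_null (subset_affineSpan ℝ P) (Measure.addHaar_affineSubspace _ _ ?_)
        intro ht
        apply h
        rw [adim, ht, AffineSubspace.direction_top, finrank_top]
        simp
      rw [Measure.real, ← hvol, this]
      simp
  rw [hsgn]
  refine (hlim.const_mul _).congr' ?_
  filter_upwards [eventually_gt_atTop 0] with N hN
  have hN0 : (N : ℝ) ≠ 0 := by positivity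
  have hI : intrinsicInterior ℝ ((N : ℝ) • P) = (N : ℝ) • C :=
    (relInt_intrinsicInterior (hc.smul _) hne.smul_set).unique (hR.smul _)
  have hset : relintLat ((N : ℝ) • P) = (fun x => (N : ℝ) • x) ''
      (C ∩ (N : ℝ)⁻¹ • (Submodule.span ℤ (Set.range (Pi.basisFun ℝ (Fin n))) : Set (Fin n → ℝ))) := by
    ext x
    constructor
    · rintro ⟨hx, hl⟩
      rw [hI] at hx
      obtain ⟨y, hy, rfl⟩ := hx
      refine ⟨y, ⟨hy, ?_⟩, rfl⟩
      rw [Set.mem_inv_smul_set_iff₀ hN0, lattice_iff]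
      exact hl
    · rintro ⟨y, ⟨hy, hl⟩, rfl⟩
      rw [Set.mem_inv_smul_set_iff₀ hN0, lattice_iff] at hl
      refine ⟨?_, hl⟩
      rw [hI]
      exact ⟨y, hy, rfl⟩
  rw [phi, hset, Set.ncard_image_of_injective _ (smul_right_injective _ hN0), adim_eq, adim_eq,
    finrank_vectorSpan_smul hN0, Fintype.card_fin, mul_div_assoc, Nat.card_coe_set_eq]

end Asymp

section Final
open Filter Topology

lemma poly_asymp (r : Polynomial ℝ) (n : ℕ) (L : ℝ)
    (h : Tendsto (fun N : ℕ => r.eval (N : ℝ) / (N : ℝ) ^ n) atTop (𝓝 L)) :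
    r.natDegree ≤ n ∧ r.coeff n = L := by
  have hq : (Polynomial.X ^ n : Polynomial ℝ) ≠ 0 := pow_ne_zero _ Polynomial.X_ne_zero
  have hdq : (Polynomial.X ^ n : Polynomial ℝ).degree = n := Polynomial.degree_X_pow n
  rcases lt_trichotomy r.degree (n : WithBot ℕ) with h1 | h1 | h1
  · have h2 := (Polynomial.div_tendsto_atTop_zero_of_degree_lt r (Polynomial.X ^ n)
      (by rw [hdq]; exact h1)).comp (tendsto_natCast_atTop_atTop (R := ℝ))
    refine ⟨Polynomial.natDegree_le_of_degree_le h1.le, ?_⟩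
    rw [Polynomial.coeff_eq_zero_of_degree_lt h1]
    refine tendsto_nhds_unique h2 ?_
    simpa [Function.comp_def] using h
  · have h2 := (Polynomial.div_tendsto_atTop_leadingCoeff_div_of_degree_eq r (Polynomial.X ^ n)
      (by rw [hdq]; exact h1)).comp (tendsto_natCast_atTop_atTop (R := ℝ))
    refine ⟨Polynomial.natDegree_le_of_degree_le h1.le, ?_⟩
    have h3 : r.leadingCoeff = r.coeff n := by
      rw [Polynomial.leadingCoeff, Polynomial.natDegree_eq_of_degree_eq_some h1]
    rw [← h3]
    refine tendsto_nhds_unique (f := fun N : ℕ => r.eval (N : ℝ) / (N : ℝ) ^ n) ?_ h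
    simpa [Function.comp_def] using h2
  · have h2 := (Polynomial.abs_div_tendsto_atTop_atTop_of_degree_gt r (Polynomial.X ^ n)
      (by rw [hdq]; exact h1) hq).comp (tendsto_natCast_atTop_atTop (R := ℝ))
    exfalso
    refine not_tendsto_nhds_of_tendsto_atTop h2 |L| ?_
    simpa [Function.comp_def] using h.abs

lemma alt_sum_zero {n : ℕ} (m : Fin n → ℕ) (i₀ : Fin n) (h : m i₀ = 0) :
    ∑ I : Finset (Fin n), (-1 : ℝ) ^ I.card * ∏ i, (if i ∈ I then (1 : ℝ) else 0) ^ m i = 0 := by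
  classical
  have h1 := Finset.prod_add (fun _ : Fin n => (-1 : ℝ)) (fun i => (0 : ℝ) ^ m i) Finset.univ
  rw [Finset.prod_eq_zero (Finset.mem_univ i₀) (by simp [h]), Finset.powerset_univ] at h1
  refine Eq.trans ?_ h1.symm
  refine Finset.sum_congr rfl fun I _ => ?_
  rw [Finset.prod_const]
  congr 1
  rw [← Finset.prod_sdiff (Finset.subset_univ I)]
  rw [Finset.prod_eq_one (s := I) (fun i hi => by simp [hi]), mul_one]
  refine Finset.prod_congr rfl fun i hi => ?_
  simp only [Finset.mem_sdiff] at hi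
  simp [hi.2]

/-- The univariate restriction of a polynomial to the ray through an indicator vector. -/
noncomputable def rayPoly {n : ℕ} (p : MvPolynomial (Fin n) ℝ) (I : Finset (Fin n)) : Polynomial ℝ :=
  ∑ m ∈ p.support, Polynomial.monomial (∑ i, m i)
    (p.coeff m * ∏ i, (if i ∈ I then (1 : ℝ) else 0) ^ m i)

lemma rayPoly_eval {n : ℕ} (p : MvPolynomial (Fin n) ℝ) (I : Finset (Fin n)) (x : ℝ) :
    (rayPoly p I).eval x = MvPolynomial.eval (fun i => x * (if i ∈ I then (1 : ℝ) else 0)) p := by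
  rw [rayPoly, Polynomial.eval_finsetSum, MvPolynomial.eval_eq']
  refine Finset.sum_congr rfl fun m _ => ?_
  rw [Polynomial.eval_monomial]
  simp_rw [mul_pow]
  rw [Finset.prod_mul_distrib, Finset.prod_pow_eq_pow_sum]
  ring

lemma rayPoly_alt {n : ℕ} (p : MvPolynomial (Fin n) ℝ) (d : ℕ) (hd : d < n) :
    ∑ I : Finset (Fin n), (-1 : ℝ) ^ I.card * (rayPoly p I).coeff d = 0 := by
  simp_rw [rayPoly, Polynomial.finsetSum_coeff, Polynomial.coeff_monomial, Finset.mul_sum]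
  rw [Finset.sum_comm]
  refine Finset.sum_eq_zero fun m _ => ?_
  by_cases hm : ∑ i, m i = d
  · have : ∃ i₀, m i₀ = 0 := by
      by_contra! hne
      have : ∑ i : Fin n, 1 ≤ ∑ i, m i :=
        Finset.sum_le_sum fun i _ => Nat.one_le_iff_ne_zero.2 (hne i)
      simp at this
      omega
    obtain ⟨i₀, hi⟩ := this
    have := alt_sum_zero (fun i => m i) i₀ hi
    simp only [hm, if_true]
    refine Eq.trans ?_ ((congrArg (p.coeff m * ·) this).trans (mul_zero _))
    simp only [Finset.mul_sum]
    exact Finset.sum_congr rfl fun I _ => by ring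
  · simp [hm]

lemma sum_ind {n : ℕ} (P : Fin n → Set (Fin n → ℝ)) (hn : ∀ i, (P i).Nonempty)
    (I : Finset (Fin n)) (N : ℕ) :
    ∑ i, ((N * (if i ∈ I then 1 else 0) : ℕ) : ℝ) • P i = (N : ℝ) • ∑ i ∈ I, P i := by
  rw [Finset.smul_sum]
  rw [← Finset.sum_subset (Finset.subset_univ I)]
  · refine Finset.sum_congr rfl fun i hi => ?_
    simp [hi]
  · intro i _ hi
    simp [hi, Set.zero_smul_set (hn i)]

lemma mixedVol_eq_sum_phi {n : ℕ} (P : Fin n → Set (Fin n → ℝ)) (hP : ∀ i, IsLatticePolytope (P i)) :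
    mixedVol P = ∑ I : Finset (Fin n), (-1 : ℝ) ^ I.card * phi (∑ i ∈ I, P i) := by
  obtain ⟨p, hp⟩ := exists_poly_of_fwdDiff n (GG P) (GG_fwdDiff P hP)
  choose V hV1 hV2 hV3 using hP
  have hc : ∀ i, Convex ℝ (P i) := fun i => by rw [hV3]; exact convex_convexHull ℝ _
  have hn : ∀ i, (P i).Nonempty := fun i => by
    rw [hV3]; exact (Finset.coe_nonempty.2 (hV1 i)).convexHull
  have hb : ∀ i, IsCompact (P i) := fun i => by
    rw [hV3]; exact (V i).finite_toSet.isCompact_convexHull ℝ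
  have hray : ∀ (I : Finset (Fin n)) (N : ℕ),
      (rayPoly p I).eval (N : ℝ) = phi ((N : ℝ) • ∑ i ∈ I, P i) := by
    intro I N
    rw [← sum_ind P hn I N, rayPoly_eval]
    have := hp (fun i => N * (if i ∈ I then 1 else 0))
    rw [GG] at this
    rw [this]
    simp
  have hdeg : ∀ I : Finset (Fin n), (rayPoly p I).natDegree ≤ n ∧
      (rayPoly p I).coeff n = (-1) ^ n * (volume (∑ i ∈ I, P i)).toReal := by
    intro I
    apply poly_asymp
    simp_rw [hray]
    have hs := sum_props P hc hn hb (fun _ => 1) I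
    simp only [one_smul] at hs
    exact phi_asymp hs.1 hs.2.1 hs.2.2.isBounded
  have h1 : ∀ I : Finset (Fin n), phi (∑ i ∈ I, P i) =
      ∑ d ∈ Finset.range (n + 1), (rayPoly p I).coeff d := by
    intro I
    have := hray I 1
    rw [Nat.cast_one, one_smul,
      Polynomial.eval_eq_sum_range' (Nat.lt_succ_of_le (hdeg I).1)] at this
    simpa using this.symm
  have h2 : ∀ I : Finset (Fin n), (-1 : ℝ) ^ I.card * phi (∑ i ∈ I, P i) =
      ∑ d ∈ Finset.range n, (-1 : ℝ) ^ I.card * (rayPoly p I).coeff d +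
        (-1 : ℝ) ^ (n - I.card) * (volume (∑ i ∈ I, P i)).toReal := by
    intro I
    have hI : I.card ≤ n := by simpa using I.card_le_univ
    rw [h1, Finset.sum_range_succ, mul_add, Finset.mul_sum, (hdeg I).2]
    congr 1
    rw [← mul_assoc, ← pow_add]
    congr 1
    obtain ⟨k, hk⟩ := Nat.exists_eq_add_of_le hI
    have : I.card + n = (n - I.card) + 2 * I.card := by omega
    rw [this, pow_add, pow_mul]
    simp
  simp_rw [h2]
  rw [Finset.sum_add_distrib, Finset.sum_comm, Finset.sum_eq_zero, zero_add, mixedVol]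
  intro d hd
  exact rayPoly_alt p d (by simpa using hd)

lemma phi_zero {n : ℕ} : phi (0 : Set (Fin n → ℝ)) = 1 := by
  have h0 : (0 : Set (Fin n → ℝ)) = {0} := rfl
  have h1 : relintLat ({0} : Set (Fin n → ℝ)) = {0} := by
    ext x
    rw [relintLat, intrinsicInterior_singleton]
    constructor
    · exact fun h => h.1
    · rintro rfl
      exact ⟨rfl, fun i => ⟨0, by simp⟩⟩
  rw [h0, phi, h1, adim_eq, vectorSpan_singleton]
  simp

end Final

/-- interior lattice point formula for the mixed volume. -/
theorem mixedVol_eq_one_add_alternating_sum_relint_lattice_points {n : ℕ}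
    (P : Fin n → Set (Fin n → ℝ)) (hP : ∀ i, IsLatticePolytope (P i)) :
    mixedVol P =
      1 + ∑ I ∈ (Finset.univ : Finset (Fin n)).powerset.filter (·.Nonempty),
        (-1 : ℝ) ^ ((adim (∑ i ∈ I, P i) : ℤ) - (I.card : ℤ)) *
          (relintLat (∑ i ∈ I, P i)).ncard := by
  rw [mixedVol_eq_sum_phi P hP, Finset.powerset_univ,
    ← Finset.sum_filter_not_add_sum_filter Finset.univ (fun I : Finset (Fin n) => I.Nonempty)]
  congr 1
  · have : (Finset.univ.filter fun I : Finset (Fin n) => ¬ I.Nonempty) = {∅} := by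
      ext I
      simp [Finset.not_nonempty_iff_eq_empty]
    rw [this, Finset.sum_singleton, Finset.sum_empty, phi_zero]
    simp
  · refine Finset.sum_congr rfl fun I _ => ?_
    rw [phi, zpow_sub₀ (by norm_num), zpow_natCast, zpow_natCast, ← mul_assoc]
    congr 1
    have h : (-1 : ℝ) ^ I.card * (-1 : ℝ) ^ I.card = 1 := by
      rw [← mul_pow]; simp
    rw [eq_div_iff (pow_ne_zero _ (by norm_num))]
    linear_combination (-1 : ℝ) ^ adim (∑ i ∈ I, P i) * h
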